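/- Closed-form evaluation of the fixed-order partial Shannon number. For every N > 0 and every integer m ≥ 0, 4N ∫_0^1 ∫_0^1 J_m(2√N p ξ)² p dp ξ dξ = 2N [J_m(2√N)² + J_{m+1}(2√N)²] − (2m+1)√N J_m(2√N) J_{m+1}(2√N) − (m/2)[1 − J₀(2√N)² − 2∑_{n=1}^m J_n(2√N)²]. -/

import Mathlib

open MeasureTheory Real

noncomputable section

/-- Bessel function of the first kind of integer order `m`, via Bessel's integral
`J_m(z) = π⁻¹ ∫_0^π cos(mθ − z sin θ) dθ`. -/
def besselJ (m : ℤ) (z : ℝ) : ℝ :=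
  π⁻¹ * ∫ θ in (0:ℝ)..π, Real.cos (m * θ - z * Real.sin θ)

theorem bJ_cont_integrand (m : ℤ) (z : ℝ) :
    Continuous fun θ : ℝ => Real.cos (m * θ - z * Real.sin θ) := by fun_prop

theorem bJ_hasDerivAt (m : ℤ) (z : ℝ) :
    HasDerivAt (besselJ m) ((besselJ (m - 1) z - besselJ (m + 1) z) / 2) z := by
  have h := intervalIntegral.hasDerivAt_integral_of_dominated_loc_of_deriv_le
    (μ := volume) (a := 0) (b := π)
    (F := fun z θ : ℝ => Real.cos (m * θ - z * Real.sin θ))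
    (F' := fun z θ : ℝ => Real.sin θ * Real.sin (m * θ - z * Real.sin θ))
    (x₀ := z) (s := Set.univ) (bound := fun _ => 1) Filter.univ_mem
    (Filter.Eventually.of_forall fun y => (bJ_cont_integrand m y).aestronglyMeasurable)
    ((bJ_cont_integrand m z).intervalIntegrable _ _)
    (by
      apply Continuous.aestronglyMeasurable
      fun_prop)
    (by
      refine Filter.Eventually.of_forall fun θ _ y _ => ?_
      rw [Real.norm_eq_abs, abs_mul]
      exact mul_le_one₀ (Real.abs_sin_le_one _) (abs_nonneg _) (Real.abs_sin_le_one _))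
    (by simp)
    (by
      refine Filter.Eventually.of_forall fun θ _ y _ => ?_
      have h1 : HasDerivAt (fun y : ℝ => m * θ - y * Real.sin θ) (-(Real.sin θ)) y := by
        simpa using ((hasDerivAt_id y).mul_const (Real.sin θ)).const_sub ((m : ℝ) * θ)
      refine h1.cos.congr_deriv ?_
      ring)
  have h2 := h.2.const_mul π⁻¹
  refine HasDerivAt.congr_deriv (f := besselJ m) h2 ?_
  symm
  unfold besselJ
  rw [← mul_sub, ← intervalIntegral.integral_sub
    ((bJ_cont_integrand (m-1) z).intervalIntegrable _ _)
    ((bJ_cont_integrand (m+1) z).intervalIntegrable _ _), mul_div_assoc,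
    ← intervalIntegral.integral_div]
  congr 1
  apply intervalIntegral.integral_congr
  intro θ _
  simp only
  have e1 : (((m - 1 : ℤ)) : ℝ) * θ - z * Real.sin θ = (m * θ - z * Real.sin θ) - θ := by
    push_cast; ring
  have e2 : (((m + 1 : ℤ)) : ℝ) * θ - z * Real.sin θ = (m * θ - z * Real.sin θ) + θ := by
    push_cast; ring
  rw [e1, e2, Real.cos_sub _ θ, Real.cos_add _ θ]
  ring

theorem bJ_rec (m : ℤ) (z : ℝ) :
    z * (besselJ (m - 1) z + besselJ (m + 1) z) = 2 * m * besselJ m z := by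
  have h : ∫ θ in (0:ℝ)..π, Real.cos (m * θ - z * Real.sin θ) * (m - z * Real.cos θ) = 0 := by
    rw [intervalIntegral.integral_eq_sub_of_hasDerivAt
      (f := fun θ : ℝ => Real.sin (m * θ - z * Real.sin θ))]
    · simp [Real.sin_int_mul_pi]
    · intro θ _
      have h1 : HasDerivAt (fun θ : ℝ => m * θ - z * Real.sin θ) (m - z * Real.cos θ) θ := by
        refine (((hasDerivAt_id θ).const_mul (m : ℝ)).sub
          ((Real.hasDerivAt_sin θ).const_mul z)).congr_deriv ?_
        simp
      exact h1.sin
    · apply Continuous.intervalIntegrable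
      fun_prop
  have e : ∀ θ : ℝ, Real.cos (m * θ - z * Real.sin θ) * (m - z * Real.cos θ) =
      m * Real.cos (m * θ - z * Real.sin θ) -
      z / 2 * (Real.cos ((m - 1 : ℤ) * θ - z * Real.sin θ)
        + Real.cos ((m + 1 : ℤ) * θ - z * Real.sin θ)) := by
    intro θ
    have e1 : (((m - 1 : ℤ)) : ℝ) * θ - z * Real.sin θ = (m * θ - z * Real.sin θ) - θ := by
      push_cast; ring
    have e2 : (((m + 1 : ℤ)) : ℝ) * θ - z * Real.sin θ = (m * θ - z * Real.sin θ) + θ := by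
      push_cast; ring
    rw [e1, e2, Real.cos_sub _ θ, Real.cos_add _ θ]
    ring
  simp_rw [e] at h
  have i0 := (bJ_cont_integrand m z).intervalIntegrable (μ := volume) 0 π
  have i1 := (bJ_cont_integrand (m - 1) z).intervalIntegrable (μ := volume) 0 π
  have i2 := (bJ_cont_integrand (m + 1) z).intervalIntegrable (μ := volume) 0 π
  rw [intervalIntegral.integral_sub (i0.const_mul _) ((i1.add i2).const_mul _),
    intervalIntegral.integral_const_mul, intervalIntegral.integral_const_mul,
    intervalIntegral.integral_add i1 i2] at h
  unfold besselJ
  linear_combination (-2 * π⁻¹) * h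

theorem bJ_continuous (m : ℤ) : Continuous (besselJ m) :=
  continuous_iff_continuousAt.2 fun z => (bJ_hasDerivAt m z).continuousAt

theorem bJ_deriv_down (m : ℤ) {z : ℝ} (hz : z ≠ 0) :
    HasDerivAt (besselJ m) (m / z * besselJ m z - besselJ (m + 1) z) z := by
  convert bJ_hasDerivAt m z using 1
  have := bJ_rec m z
  field_simp
  linear_combination -this

theorem bJ_deriv_up (m : ℤ) {z : ℝ} (hz : z ≠ 0) :
    HasDerivAt (besselJ (m + 1)) (besselJ m z - (m + 1) / z * besselJ (m + 1) z) z := by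
  convert bJ_hasDerivAt (m + 1) z using 1
  have := bJ_rec (m + 1) z
  rw [add_sub_cancel_right] at this ⊢
  push_cast at this
  field_simp
  linear_combination this

theorem bJ_zero_zero : besselJ 0 0 = 1 := by
  simp [besselJ, Real.pi_ne_zero]

def bH (m : ℕ) (t : ℝ) : ℝ :=
  t ^ 2 / 2 * (besselJ m t ^ 2 + besselJ (m + 1) t ^ 2) - m * (t * (besselJ m t * besselJ (m + 1) t))

def bS (m : ℕ) (t : ℝ) : ℝ :=
  besselJ 0 t ^ 2 + 2 * ∑ n ∈ Finset.Icc 1 m, besselJ n t ^ 2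

def bG (m : ℕ) (t : ℝ) : ℝ :=
  t ^ 2 / 2 * (besselJ m t ^ 2 + besselJ (m + 1) t ^ 2)
    - (2 * m + 1) / 2 * (t * (besselJ m t * besselJ (m + 1) t))
    - m / 2 * (1 - bS m t)

theorem bA_deriv (m : ℕ) {t : ℝ} (ht : t ≠ 0) :
    HasDerivAt (fun t => t ^ 2 / 2 * (besselJ m t ^ 2 + besselJ (m + 1) t ^ 2))
      (t * ((m + 1) * besselJ m t ^ 2 - m * besselJ (m + 1) t ^ 2)) t := by
  have h1 := bJ_deriv_down m ht
  have h2 := bJ_deriv_up m ht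
  refine HasDerivAt.congr_deriv ((((hasDerivAt_id t).pow 2).div_const 2).mul ((h1.pow 2).add (h2.pow 2))) ?_
  simp
  field_simp
  ring

theorem bB_deriv (m : ℕ) {t : ℝ} (ht : t ≠ 0) :
    HasDerivAt (fun t => t * (besselJ m t * besselJ (m + 1) t))
      (t * (besselJ m t ^ 2 - besselJ (m + 1) t ^ 2)) t := by
  have h1 := bJ_deriv_down m ht
  have h2 := bJ_deriv_up m ht
  refine HasDerivAt.congr_deriv ((hasDerivAt_id t).mul (h1.mul h2)) ?_
  simp
  field_simp
  ring

theorem bS_deriv (m : ℕ) {t : ℝ} (ht : t ≠ 0) :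
    HasDerivAt (bS m) (-2 * (besselJ m t * besselJ (m + 1) t)) t := by
  induction m with
  | zero =>
    have e : bS 0 = fun t => besselJ 0 t ^ 2 := by
      funext t; simp [bS]
    rw [e]
    refine HasDerivAt.congr_deriv ((bJ_deriv_down 0 ht).pow 2) ?_
    simp
    ring
  | succ k ih =>
    have e : bS (k + 1) = fun t => bS k t + 2 * besselJ ((k + 1 : ℕ) : ℤ) t ^ 2 := by
      funext t
      simp only [bS]
      rw [Finset.sum_Icc_succ_top (by omega)]
      ring
    rw [e]
    refine HasDerivAt.congr_deriv (ih.add (((bJ_hasDerivAt ((k + 1 : ℕ) : ℤ) t).pow 2).const_mul 2)) ?_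
    push_cast
    rw [add_sub_cancel_right]
    ring

theorem bH_deriv (m : ℕ) {t : ℝ} (ht : t ≠ 0) :
    HasDerivAt (bH m) (t * besselJ m t ^ 2) t := by
  refine HasDerivAt.congr_deriv ((bA_deriv m ht).sub ((bB_deriv m ht).const_mul (m : ℝ))) ?_
  ring

theorem bG_deriv (m : ℕ) {t : ℝ} (ht : t ≠ 0) :
    HasDerivAt (bG m) (bH m t / t) t := by
  refine HasDerivAt.congr_deriv (((bA_deriv m ht).sub ((bB_deriv m ht).const_mul ((2 * m + 1) / 2 : ℝ))).sub
    (((bS_deriv m ht).const_sub 1).const_mul ((m : ℝ) / 2))) ?_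
  unfold bH
  field_simp
  ring

theorem bH_cont (m : ℕ) : Continuous (bH m) := by
  have h := bJ_continuous
  unfold bH
  fun_prop

theorem bG_cont (m : ℕ) : Continuous (bG m) := by
  have h := bJ_continuous
  unfold bG bS
  fun_prop

theorem bJ_zero_pos (n : ℕ) (hn : 1 ≤ n) : besselJ n 0 = 0 := by
  have h := bJ_rec n 0
  have : (n : ℝ) ≠ 0 := by positivity
  simp at h
  rcases h with h | h
  · omega
  · exact h

theorem bG_zero (m : ℕ) : bG m 0 = 0 := by
  have : ∑ n ∈ Finset.Icc 1 m, besselJ n 0 ^ 2 = 0 := by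
    apply Finset.sum_eq_zero
    intro n hn
    rw [bJ_zero_pos n (Finset.mem_Icc.1 hn).1]
    simp
  simp [bG, bS, this, bJ_zero_zero]

theorem bH_zero (m : ℕ) : bH m 0 = 0 := by simp [bH]

theorem inner_eq (m : ℕ) {c : ℝ} (hc : c ≠ 0) :
    ∫ p in (0:ℝ)..1, besselJ m (c * p) ^ 2 * p = bH m c / c ^ 2 := by
  have hJ := bJ_continuous m
  rw [eq_div_iff (by positivity), mul_comm, ← intervalIntegral.integral_const_mul]
  rw [intervalIntegral.integral_eq_sub_of_hasDerivAt_of_le (f := fun p => bH m (c * p))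
    zero_le_one]
  · simp [bH_zero]
  · have := bH_cont m
    fun_prop
  · intro p hp
    have hcp : c * p ≠ 0 := mul_ne_zero hc hp.1.ne'
    have h1 : HasDerivAt (fun p : ℝ => c * p) c p := by
      simpa using (hasDerivAt_id p).const_mul c
    refine HasDerivAt.congr_deriv ((bH_deriv m hcp).comp p h1) ?_
    ring
  · apply Continuous.intervalIntegrable
    fun_prop

theorem outer_eq (m : ℕ) {x : ℝ} (hx : x ≠ 0) :
    x ^ 2 * ∫ ξ in (0:ℝ)..1, (∫ p in (0:ℝ)..1, besselJ m (x * p * ξ) ^ 2 * p) * ξ = bG m x := by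
  have hJ := bJ_continuous m
  rw [← intervalIntegral.integral_const_mul]
  rw [intervalIntegral.integral_eq_sub_of_hasDerivAt_of_le (f := fun ξ => bG m (x * ξ))
    zero_le_one]
  · simp [bG_zero]
  · have := bG_cont m
    fun_prop
  · intro ξ hξ
    have hξ0 : ξ ≠ 0 := hξ.1.ne'
    have hc : x * ξ ≠ 0 := mul_ne_zero hx hξ0
    have h1 : HasDerivAt (fun p : ℝ => x * p) x ξ := by
      simpa using (hasDerivAt_id ξ).const_mul x
    refine HasDerivAt.congr_deriv ((bG_deriv m hc).comp ξ h1) ?_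
    have e : ∀ p : ℝ, x * p * ξ = x * ξ * p := fun p => by ring
    simp_rw [e]
    rw [inner_eq m hc]
    field_simp
  · apply Continuous.intervalIntegrable
    have : Continuous fun ξ : ℝ => ∫ p in (0:ℝ)..1, besselJ m (x * p * ξ) ^ 2 * p := by
      apply intervalIntegral.continuous_parametric_intervalIntegral_of_continuous'
      simp only [Function.uncurry_def]
      fun_prop
    fun_prop

/-- Closed-form evaluation of the fixed-order partial Shannon number: for
every `N > 0` and integer `m ≥ 0`,
`4N ∫_0^1 ∫_0^1 J_m(2√N pξ)² p dp ξ dξ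
  = 2N[J_m(2√N)² + J_{m+1}(2√N)²] − (2m+1)√N J_m(2√N) J_{m+1}(2√N)
    − (m/2)[1 − J₀(2√N)² − 2∑_{n=1}^m J_n(2√N)²]`. -/
theorem partial_shannon_number_closed_form (N : ℝ) (hN : 0 < N) (m : ℕ) :
    4 * N * ∫ ξ in (0:ℝ)..1,
        (∫ p in (0:ℝ)..1, besselJ m (2 * Real.sqrt N * p * ξ) ^ 2 * p) * ξ =
      2 * N * (besselJ m (2 * Real.sqrt N) ^ 2 + besselJ (m + 1) (2 * Real.sqrt N) ^ 2)
      - (2 * (m : ℝ) + 1) * Real.sqrt N *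
          besselJ m (2 * Real.sqrt N) * besselJ (m + 1) (2 * Real.sqrt N)
      - ((m : ℝ) / 2) * (1 - besselJ 0 (2 * Real.sqrt N) ^ 2
          - 2 * ∑ n ∈ Finset.Icc 1 m, besselJ n (2 * Real.sqrt N) ^ 2) := by
  have hs : Real.sqrt N ≠ 0 := (Real.sqrt_pos.2 hN).ne'
  have hsq : Real.sqrt N ^ 2 = N := Real.sq_sqrt hN.le
  have h := outer_eq m (x := 2 * Real.sqrt N) (mul_ne_zero two_ne_zero hs)
  have h4 : (2 * Real.sqrt N) ^ 2 = 4 * N := by rw [mul_pow, hsq]; norm_num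
  rw [h4] at h
  rw [h]
  unfold bG bS
  rw [h4]
  ring
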